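/- arXiv:2203.10761 — 2 statements merged into one kernel-verified Lean document; each statement's English description precedes it below -/
import Mathlib

section
/- Fix an integer C ≥ 2 and label vectors y_a, y_b ∈ ℝ^C. For every z ∈ ℝ^C, Σ_{i=1}^C Σ_{j=1}^C y_a^i y_b^j (log φ(z)^{i,j} + log φ(z)^{j,i}) = Σ_{i=1}^C Σ_{j=1}^C y_a^i y_b^j (log(p^i/(1 − p^j)) + log(p^j/(1 − p^i))), where p = σ(z); i.e., the decoupled mixup cross-entropy L_DM can be written in terms of the softmax probabilities p as −Σ_{i,j} y_a^i y_b^j (log(p^i/(1−p^j)) + log(p^j/(1−p^i))). (Paper's Proposition 2.) -/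
noncomputable def softmax {C : ℕ} (z : Fin C → ℝ) (i : Fin C) : ℝ :=
  Real.exp (z i) / ∑ c, Real.exp (z c)

noncomputable def dsoftmax {C : ℕ} (z : Fin C → ℝ) (i j : Fin C) : ℝ :=
  Real.exp (z i) / ∑ c ∈ Finset.univ.erase j, Real.exp (z c)

theorem sum_exp_pos {ι : Type*} [Fintype ι] [Nonempty ι] (f : ι → ℝ) :
    0 < ∑ c, Real.exp (f c) :=
  Finset.sum_pos (fun c _ ↦ Real.exp_pos (f c)) Finset.univ_nonempty

section Softmax

variable {C : ℕ} (z : Fin C → ℝ)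

theorem one_sub_softmax (j : Fin C) :
    1 - softmax z j
      = (∑ c ∈ Finset.univ.erase j, Real.exp (z c)) / ∑ c, Real.exp (z c) := by
  have : Nonempty (Fin C) := ⟨j⟩
  rw [softmax, one_sub_div (sum_exp_pos z).ne', Finset.sum_erase_eq_sub (Finset.mem_univ j)]

theorem dsoftmax_eq_softmax_div_one_sub_softmax (i j : Fin C) :
    dsoftmax z i j = softmax z i / (1 - softmax z j) := by
  have : Nonempty (Fin C) := ⟨j⟩
  rw [one_sub_softmax, softmax, div_div_div_cancel_right₀ (sum_exp_pos z).ne', dsoftmax]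

end Softmax

theorem stmt_5 (C : ℕ) (hC : 2 ≤ C) (ya yb : Fin C → ℝ) :
    ∀ z : Fin C → ℝ,
      ∑ i, ∑ j, ya i * yb j
          * (Real.log (dsoftmax z i j) + Real.log (dsoftmax z j i))
        = ∑ i, ∑ j, ya i * yb j
          * (Real.log (softmax z i / (1 - softmax z j))
             + Real.log (softmax z j / (1 - softmax z i))) := by
  intro z
  simp only [dsoftmax_eq_softmax_div_one_sub_softmax]
end

section
/- Fix an integer C ≥ 2 and distinct classes i, j ∈ {1,…,C}. For every z ∈ ℝ^C, the partial derivative of the decoupled mixup loss L_DM with respect to z^i equals φ(z)^{i,j} − 1, which is ≤ 0 for all z, with strict inequality for all z whenever C ≥ 3; in particular this derivative does not depend on any mixing ratio. (The decoupled regularizer pushes the prediction on the mixed classes toward full confidence, escaping the λ-constraint.) -/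
noncomputable def LDM {C : ℕ} (i j : Fin C) (z : Fin C → ℝ) : ℝ :=
  -(Real.log (dsoftmax z i j) + Real.log (dsoftmax z j i))

/-!
For `i ≠ j`, the logarithm of `dsoftmax z i j` is `z i` minus the log-sum-exp of `z` away from `j`.
The `i`-th partial derivative of log-sum-exp is the softmax, so this logarithm contributes
`1 - dsoftmax z i j`, whereas `dsoftmax z j i` does not involve `z i` at all. The denominator of
`dsoftmax z i j` has `exp (z i)` as one of its positive terms, and further ones as soon as there
is a third class.
-/

section LogSumExp

variable {ι : Type*} {s : Finset ι}

theorem sum_exp_pos_s11 (hs : s.Nonempty) (z : ι → ℝ) : 0 < ∑ c ∈ s, Real.exp (z c) :=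
  Finset.sum_pos (fun _ _ ↦ Real.exp_pos _) hs

variable [DecidableEq ι] {i : ι}

theorem sum_exp_update_of_mem (hi : i ∈ s) (z : ι → ℝ) (t : ℝ) :
    ∑ c ∈ s, Real.exp (Function.update z i t c) =
      Real.exp t + ∑ c ∈ s \ {i}, Real.exp (z c) := by
  simp only [Function.apply_update (fun _ ↦ Real.exp), Finset.sum_update_of_mem hi]

theorem sum_exp_update_of_notMem (hi : i ∉ s) (z : ι → ℝ) (t : ℝ) :
    ∑ c ∈ s, Real.exp (Function.update z i t c) = ∑ c ∈ s, Real.exp (z c) := by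
  simp only [Function.apply_update (fun _ ↦ Real.exp), Finset.sum_update_of_notMem hi]

theorem hasDerivAt_sum_exp_update (hi : i ∈ s) (z : ι → ℝ) (t : ℝ) :
    HasDerivAt (fun x ↦ ∑ c ∈ s, Real.exp (Function.update z i x c)) (Real.exp t) t := by
  simpa only [sum_exp_update_of_mem hi] using (Real.hasDerivAt_exp t).add_const _

theorem hasDerivAt_log_sum_exp_update (hi : i ∈ s) (z : ι → ℝ) (t : ℝ) :
    HasDerivAt (fun x ↦ Real.log (∑ c ∈ s, Real.exp (Function.update z i x c)))
      (Real.exp t / ∑ c ∈ s, Real.exp (Function.update z i t c)) t :=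
  (hasDerivAt_sum_exp_update hi z t).log (sum_exp_pos_s11 ⟨i, hi⟩ _).ne'

end LogSumExp

section DecoupledSoftmax

variable {C : ℕ} {i j : Fin C}

theorem dsoftmax_le_one (hij : i ≠ j) (z : Fin C → ℝ) : dsoftmax z i j ≤ 1 := by
  have hi : i ∈ Finset.univ.erase j := by simp [hij]
  exact (div_le_one (sum_exp_pos_s11 ⟨i, hi⟩ z)).2 <|
    Finset.single_le_sum (f := fun c ↦ Real.exp (z c)) (fun _ _ ↦ (Real.exp_pos _).le) hi

theorem dsoftmax_lt_one {k : Fin C} (hij : i ≠ j) (hki : k ≠ i) (hkj : k ≠ j) (z : Fin C → ℝ) :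
    dsoftmax z i j < 1 := by
  have hi : i ∈ Finset.univ.erase j := by simp [hij]
  have hk : k ∈ Finset.univ.erase j := by simp [hkj]
  exact (div_lt_one (sum_exp_pos_s11 ⟨i, hi⟩ z)).2 <|
    Finset.single_lt_sum (f := fun c ↦ Real.exp (z c)) hki hi hk (Real.exp_pos _)
      fun _ _ _ ↦ (Real.exp_pos _).le

theorem log_dsoftmax (hij : i ≠ j) (z : Fin C → ℝ) :
    Real.log (dsoftmax z i j) =
      z i - Real.log (∑ c ∈ Finset.univ.erase j, Real.exp (z c)) := by
  have hi : i ∈ Finset.univ.erase j := by simp [hij]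
  rw [dsoftmax, Real.log_div (Real.exp_ne_zero _) (sum_exp_pos_s11 ⟨i, hi⟩ z).ne', Real.log_exp]

theorem dsoftmax_update_right (hij : i ≠ j) (z : Fin C → ℝ) (t : ℝ) :
    dsoftmax (Function.update z j t) i j = dsoftmax z i j := by
  rw [dsoftmax, dsoftmax, Function.update_of_ne hij,
    sum_exp_update_of_notMem (Finset.notMem_erase j _)]

theorem hasDerivAt_log_dsoftmax_update_left (hij : i ≠ j) (z : Fin C → ℝ) (t : ℝ) :
    HasDerivAt (fun x ↦ Real.log (dsoftmax (Function.update z i x) i j))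
      (1 - dsoftmax (Function.update z i t) i j) t := by
  have hi : i ∈ Finset.univ.erase j := by simp [hij]
  simp only [log_dsoftmax hij, Function.update_self]
  simpa only [dsoftmax, Function.update_self]
    using (hasDerivAt_id' t).fun_sub (hasDerivAt_log_sum_exp_update hi z t)

theorem hasDerivAt_LDM_update (hij : i ≠ j) (z : Fin C → ℝ) (t : ℝ) :
    HasDerivAt (fun x ↦ LDM i j (Function.update z i x))
      (dsoftmax (Function.update z i t) i j - 1) t := by
  simpa only [LDM, dsoftmax_update_right hij.symm, neg_sub]
    using ((hasDerivAt_log_dsoftmax_update_left hij z t).add_const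
      (Real.log (dsoftmax z j i))).fun_neg

end DecoupledSoftmax

theorem stmt_11 (C : ℕ) (hC : 2 ≤ C) (i j : Fin C) (hij : i ≠ j) :
    ∀ z : Fin C → ℝ,
      HasDerivAt (fun t : ℝ => LDM i j (Function.update z i t))
        (dsoftmax z i j - 1) (z i) ∧
      dsoftmax z i j - 1 ≤ 0 ∧
      (3 ≤ C → dsoftmax z i j - 1 < 0) := by
  intro z
  refine ⟨?_, sub_nonpos.2 (dsoftmax_le_one hij z), fun three_le ↦ ?_⟩
  · simpa only [Function.update_eq_self] using hasDerivAt_LDM_update hij z (z i)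
  · obtain ⟨k, hki, hkj⟩ : ∃ k, k ≠ i ∧ k ≠ j :=
      ENat.exists_ne_ne_of_three_le (by simpa using mod_cast three_le) i j
    exact sub_neg.2 (dsoftmax_lt_one hij hki hkj z)
end
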